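/- arXiv:math/0012029 — 3 statements merged into one kernel-verified Lean document; each statement's English description precedes it below -/
import Mathlib

section
/- For each unordered pair {α,β} in {{132,213}, {231,312}} of patterns of length three, the number of permutations of {1,…,n} that contain α exactly once and contain β exactly once is s_n(∅;{α,β}) = (n²+21n−28)·2^{n−9} for all n ≥ 7, with s_6(∅;{α,β}) = 17, s_5(∅;{α,β}) = 6, and s_4(∅;{α,β}) = 3. -/
/-- Number of occurrences of the pattern `α ∈ S_k` in the permutation `π ∈ S_n`:
the number of strictly increasing choices of `k` indices such that the corresponding
subword of `π` is order-isomorphic to `α`. -/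
noncomputable def occCount {k n : ℕ} (α : Equiv.Perm (Fin k)) (π : Equiv.Perm (Fin n)) : ℕ :=
  Nat.card {f : Fin k → Fin n // StrictMono f ∧ ∀ a b : Fin k, α a < α b ↔ π (f a) < π (f b)}

/-- `π` avoids the pattern `α`. -/
def avoids {k n : ℕ} (α : Equiv.Perm (Fin k)) (π : Equiv.Perm (Fin n)) : Prop :=
  occCount α π = 0

/-- `π` contains the pattern `α` exactly once. -/
def containsOnce {k n : ℕ} (α : Equiv.Perm (Fin k)) (π : Equiv.Perm (Fin n)) : Prop :=
  occCount α π = 1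

/-- The pattern `123` (as a permutation of `Fin 3`, 0-indexed). -/
def p123 : Equiv.Perm (Fin 3) := ⟨![0,1,2], ![0,1,2], by decide, by decide⟩
/-- The pattern `132`. -/
def p132 : Equiv.Perm (Fin 3) := ⟨![0,2,1], ![0,2,1], by decide, by decide⟩
/-- The pattern `213`. -/
def p213 : Equiv.Perm (Fin 3) := ⟨![1,0,2], ![1,0,2], by decide, by decide⟩
/-- The pattern `231`. -/
def p231 : Equiv.Perm (Fin 3) := ⟨![1,2,0], ![2,0,1], by decide, by decide⟩
/-- The pattern `312`. -/
def p312 : Equiv.Perm (Fin 3) := ⟨![2,0,1], ![1,2,0], by decide, by decide⟩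
/-- The pattern `321`. -/
def p321 : Equiv.Perm (Fin 3) := ⟨![2,1,0], ![2,1,0], by decide, by decide⟩

/-- `s_n(α;β)`: the number of permutations of `{1,…,n}` that avoid `α` and contain `β`
exactly once. -/
noncomputable def sAvoidContain (α β : Equiv.Perm (Fin 3)) (n : ℕ) : ℕ :=
  Nat.card {π : Equiv.Perm (Fin n) // avoids α π ∧ containsOnce β π}

/-- `s_n(∅;{α,β})`: the number of permutations of `{1,…,n}` that contain each of `α` and `β`
exactly once. -/
noncomputable def sContainBoth (α β : Equiv.Perm (Fin 3)) (n : ℕ) : ℕ :=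
  Nat.card {π : Equiv.Perm (Fin n) // containsOnce α π ∧ containsOnce β π}

/-- At most one occurrence of 231. -/
def U1 (f : ℕ → ℕ) : Prop := ∀ i j l i' j' l' : ℕ, i < j → j < l → f l < f i → f i < f j →
  i' < j' → j' < l' → f l' < f i' → f i' < f j' → i = i' ∧ j = j' ∧ l = l'

/-- At most one occurrence of 312. -/
def U2 (f : ℕ → ℕ) : Prop := ∀ i j l i' j' l' : ℕ, i < j → j < l → f j < f l → f l < f i →
  i' < j' → j' < l' → f j' < f l' → f l' < f i' → i = i' ∧ j = j' ∧ l = l'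

theorem U2_inv {f g : ℕ → ℕ} (hfg : ∀ x, f (g x) = x) (h : U1 f) : U2 g := by
  intro i j l i' j' l' h1 h2 h3 h4 h1' h2' h3' h4'
  have := h (g j) (g l) (g i) (g j') (g l') (g i') h3 h4 (by simpa [hfg]) (by simpa [hfg]) h3' h4'
    (by simpa [hfg]) (by simpa [hfg])
  have e : ∀ x y, g x = g y → x = y := fun x y h => by rw [← hfg x, h, hfg]
  exact ⟨e _ _ this.2.2, e _ _ this.1, e _ _ this.2.1⟩

theorem U1_inv {f g : ℕ → ℕ} (hfg : ∀ x, f (g x) = x) (h : U2 f) : U1 g := by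
  intro i j l i' j' l' h1 h2 h3 h4 h1' h2' h3' h4'
  have := h (g l) (g i) (g j) (g l') (g i') (g j') h3 h4 (by simpa [hfg]) (by simpa [hfg]) h3' h4'
    (by simpa [hfg]) (by simpa [hfg])
  have e : ∀ x y, g x = g y → x = y := fun x y h => by rw [← hfg x, h, hfg]
  exact ⟨e _ _ this.2.1, e _ _ this.2.2, e _ _ this.1⟩

theorem cls_one {f g : ℕ → ℕ} (hfg : ∀ x, f (g x) = x) (hgf : ∀ x, g (f x) = x)
    (h1 : U1 f) (h2 : U2 f) (hv : f 0 = 1) :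
    f 1 = 0 ∨ (f 1 = 2 ∧ f 2 = 0) ∨ (f 1 = 3 ∧ f 2 = 0 ∧ f 3 = 2) := by
  have inj : ∀ x y, f x = f y → x = y := fun x y h => by rw [← hgf x, h, hgf]
  have big : ∀ j, 0 < j → j < g 0 → 1 < f j := by
    intro j hj hjp
    have := inj j 0
    have := inj j (g 0)
    have := hfg 0
    grind
  have g00 : g 0 ≠ 0 := by intro h; have := hfg 0; rw [h] at this; omega
  have hp : g 0 ≤ 2 := by
    by_contra hp
    have := h1 0 1 (g 0) 0 2 (g 0) (by omega) (by omega) (by rw [hfg]; omega)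
      (by have := big 1 (by omega) (by omega); omega) (by omega) (by omega) (by rw [hfg]; omega)
      (by have := big 2 (by omega) (by omega); omega)
    omega
  by_cases hp1 : g 0 = 1
  · left; rw [← hp1, hfg]
  have hp2 : g 0 = 2 := by omega
  have f2 : f 2 = 0 := by rw [← hp2, hfg]
  have f1 := big 1 (by omega) (by omega)
  have late : ∀ x, 2 ≤ x → x < f 1 → 3 ≤ g x := by
    intro x hx hx'
    have := hfg x
    by_contra hc
    have : g x = 0 ∨ g x = 1 ∨ g x = 2 := by omega
    rcases this with h | h | h <;> rw [h] at this <;> omega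
  by_cases h12 : f 1 = 2
  · right; left; exact ⟨h12, f2⟩
  right; right
  have l2 := late 2 (by omega) (by omega)
  have h13 : f 1 = 3 := by
    by_contra hc
    have l3 := late 3 (by omega) (by omega)
    have := h2 1 2 (g 2) 1 2 (g 3) (by omega) (by omega) (by rw [hfg]; omega) (by rw [hfg]; omega)
      (by omega) (by omega) (by rw [hfg]; omega) (by rw [hfg]; omega)
    have e := hfg 2
    rw [this.2.2, hfg] at e
    omega
  refine ⟨h13, f2, ?_⟩
  by_contra hc
  have hg : g 2 ≠ 3 := by intro h; rw [← h, hfg] at hc; omega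
  have f3 : 3 < f 3 := by
    have a0 := inj 3 0
    have a1 := inj 3 1
    have a2 := inj 3 2
    omega
  have := h1 0 1 2 1 3 (g 2) (by omega) (by omega) (by omega) (by omega) (by omega) (by omega)
    (by rw [hfg]; omega) (by omega)
  omega

theorem anti_bd {f : ℕ → ℕ} {p : ℕ} (h : ∀ i j, i < j → j ≤ p → f j < f i) :
    ∀ i, i ≤ p → f i + i ≤ f 0 ∧ f p + (p - i) ≤ f i := by
  have A : ∀ d i, i + d ≤ p → f (i + d) + d ≤ f i := by
    intro d
    induction d with
    | zero => intro i _; simp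
    | succ d ih =>
      intro i hi
      have := ih i (by omega)
      have := h (i + d) (i + (d+1)) (by omega) (by omega)
      omega
  intro i hi
  constructor
  · have := A i 0 (by omega); simpa using this
  · have := A (p - i) i (by omega)
    rwa [show i + (p - i) = p by omega] at this

theorem cls_two {f g : ℕ → ℕ} (hfg : ∀ x, f (g x) = x) (hgf : ∀ x, g (f x) = x)
    (h1 : U1 f) (h2 : U2 f) (hv : 2 ≤ f 0) (hp : 2 ≤ g 0) :
    (∀ i, i < f 0 + 1 → f i = f 0 - i) ∨ (f 0 = 3 ∧ f 1 = 1 ∧ f 2 = 2 ∧ f 3 = 0) := by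
  have inj : ∀ x y, f x = f y → x = y := fun x y h => by rw [← hgf x, h, hgf]
  have ginj : ∀ x y, g x = g y → x = y := fun x y h => by rw [← hfg x, h, hfg]
  have small : ∀ j, 0 < j → j < g 0 → 0 < f j ∧ f j < f 0 := by
    intro j hj hjp
    have n0 : f j ≠ f 0 := fun h => by have := inj _ _ h; omega
    have n1 : f j ≠ 0 := fun h => by have := inj j (g 0) (by rw [hfg, h]); omega
    refine ⟨by omega, ?_⟩
    by_contra hc
    have c1 : g 1 ≠ j := fun h => by have := hfg 1; rw [h] at this; omega
    have c2 : g 1 ≠ 0 := fun h => by have := hfg 1; rw [h] at this; omega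
    have c3 : g 1 ≠ g 0 := fun h => by have := ginj _ _ h; omega
    rcases Nat.lt_or_ge j (g 1) with h | h
    · have := h1 0 j (g 0) 0 j (g 1) hj hjp (by rw [hfg]; omega) (by omega) hj h
        (by rw [hfg]; omega) (by omega)
      omega
    · have := h1 0 j (g 0) (g 1) j (g 0) hj hjp (by rw [hfg]; omega) (by omega) (by omega) hjp
        (by rw [hfg, hfg]; omega) (by rw [hfg]; omega)
      omega
  have gsmall : ∀ x, 0 < x → x < f 0 → 0 < g x ∧ g x < g 0 := by
    intro x hx hxv
    have n0 : g x ≠ g 0 := fun h => by have := ginj _ _ h; omega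
    have n1 : g x ≠ 0 := fun h => by have := hfg x; rw [h] at this; omega
    refine ⟨by omega, ?_⟩
    by_contra hc
    have s := small 1 (by omega) (by omega)
    have c1 : f 1 ≠ x := fun h => by have := hgf 1; rw [h] at this; omega
    have a := h2 0 (g 0) (g x)
    rcases Nat.lt_or_ge x (f 1) with h | h
    · have := a 1 (g 0) (g x) (by omega) (by omega) (by rw [hfg, hfg]; omega) (by rw [hfg]; omega)
        (by omega) (by omega) (by rw [hfg, hfg]; omega) (by rw [hfg]; omega)
      omega
    · have := a 0 1 (g x) (by omega) (by omega) (by rw [hfg, hfg]; omega) (by rw [hfg]; omega)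
        (by omega) (by omega) (by rw [hfg]; omega) (by rw [hfg]; omega)
      omega
  have fp := hfg 0
  by_cases hasc : ∃ i j, 0 < i ∧ i < j ∧ j < g 0 ∧ f i < f j
  · right
    obtain ⟨i, j, hi, hij, hj, hf⟩ := hasc
    have si := small i hi (by omega)
    have sj := small j (by omega) hj
    have only : ∀ k, 0 < k → k < g 0 → k = i ∨ k = j := by
      intro k hk hkp
      by_contra hc
      have sk := small k hk hkp
      have X : ∀ i' j', 0 < i' → i' < j' → j' < g 0 → f i' < f j' → i = i' ∧ j = j' := by
        intro i' j' q1 q2 q3 q4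
        have b := small i' q1 (by omega)
        have := h1 i j (g 0) i' j' (g 0) hij hj (by omega) hf q2 q3 (by omega) q4
        omega
      have nki : f k ≠ f i := fun h => by have := inj _ _ h; omega
      have nkj : f k ≠ f j := fun h => by have := inj _ _ h; omega
      have X1 := X i k hi
      have X2 := X k i hk
      have X3 := X j k (by omega)
      have X4 := X k j hk
      rcases Nat.lt_trichotomy k i with h | h | h
      · have := h2 0 i j k i j hi hij hf (by omega) h hij hf (by omega)
        omega
      · omega
      · rcases Nat.lt_trichotomy k j with h' | h' | h'
        · omega
        · omega
        · have := h1 i j (g 0) i j k hij hj (by omega) hf hij h' (by omega) hf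
          omega
    have i1 : i = 1 := by have := only 1 (by omega) (by omega); omega
    have j2 : j = 2 := by have := only 2 (by omega) (by omega); omega
    have p3 : g 0 = 3 := by
      by_contra hc; have := only 3 (by omega) (by omega); omega
    subst i1 j2
    have v3 : f 0 = 3 := by
      by_contra hc
      have a1 := gsmall 1 (by omega) (by omega)
      have a2 := gsmall 2 (by omega) (by omega)
      have a3 := gsmall 3 (by omega) (by omega)
      have b1 := ginj 1 2
      have b2 := ginj 1 3
      have b3 := ginj 2 3
      omega
    refine ⟨v3, by omega, by omega, by rw [← p3, hfg]⟩
  · left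
    push Not at hasc
    have dec : ∀ i j, i < j → j ≤ g 0 → f j < f i := by
      intro i j hij hj
      have nij : f i ≠ f j := fun h => by have := inj _ _ h; omega
      rcases Nat.eq_zero_or_pos i with rfl | hi
      · rcases Nat.lt_or_eq_of_le hj with h | h
        · exact (small j (by omega) h).2
        · rw [h, hfg]; omega
      · have b := small i hi (by omega)
        rcases Nat.lt_or_eq_of_le hj with h | h
        · have := hasc i j hi hij h; omega
        · rw [h, hfg]; omega
    have B := anti_bd dec
    have gdec : ∀ x y, x < y → y ≤ f 0 → g y < g x := by
      intro x y hxy hy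
      by_contra hc
      have q : g y ≤ g 0 := by
        rcases Nat.lt_or_eq_of_le hy with h | h
        · exact (gsmall y (by omega) h).2.le
        · rw [h, hgf]; omega
      have : g x ≠ g y := fun h => by have := ginj _ _ h; omega
      have := dec (g x) (g y) (by omega) q
      rw [hfg, hfg] at this
      omega
    have C := anti_bd gdec
    have e1 := (B (g 0) le_rfl).1
    have e2 := (C (f 0) le_rfl).1
    rw [hfg] at e1
    rw [hgf] at e2
    intro i hi
    have := B i (by omega)
    omega

theorem cls {f g : ℕ → ℕ} (hfg : ∀ x, f (g x) = x) (hgf : ∀ x, g (f x) = x)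
    (h1 : U1 f) (h2 : U2 f) :
    (∀ i, i < f 0 + 1 → f i = f 0 - i) ∨ (f 0 = 1 ∧ f 1 = 2 ∧ f 2 = 0) ∨
    (f 0 = 2 ∧ f 1 = 0 ∧ f 2 = 1) ∨ (f 0 = 1 ∧ f 1 = 3 ∧ f 2 = 0 ∧ f 3 = 2) ∨
    (f 0 = 2 ∧ f 1 = 0 ∧ f 2 = 3 ∧ f 3 = 1) ∨ (f 0 = 3 ∧ f 1 = 1 ∧ f 2 = 2 ∧ f 3 = 0) := by
  by_cases h0 : f 0 = 0
  · left; intro i hi; have : i = 0 := by omega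
    subst this; omega
  by_cases hv : f 0 = 1
  · rcases cls_one hfg hgf h1 h2 hv with h | h | h
    · left; intro i hi
      have : i = 0 ∨ i = 1 := by omega
      rcases this with rfl | rfl <;> omega
    · right; left; exact ⟨hv, h⟩
    · right; right; right; left; exact ⟨hv, h⟩
  have g0 : g 0 ≠ 0 := fun h => by have := hfg 0; rw [h] at this; omega
  by_cases gv : g 0 = 1
  · have e : ∀ x y, g x = y → f y = x := fun x y h => by rw [← h, hfg]
    rcases cls_one hgf hfg (U1_inv hfg h2) (U2_inv hfg h1) gv with h | h | h
    · have := e _ _ h; omega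
    · right; right; left
      exact ⟨e _ _ h.2, e _ _ gv, e _ _ h.1⟩
    · right; right; right; right; left
      exact ⟨e _ _ h.2.1, e _ _ gv, e _ _ h.2.2, e _ _ h.1⟩
  rcases cls_two hfg hgf h1 h2 (by omega) (by omega) with h | h
  · left; exact h
  · right; right; right; right; right; exact h

open Finset in
/-- Number of occurrences of 231. -/
def o1 {n : ℕ} (π : Equiv.Perm (Fin n)) : ℕ :=
  ∑ i, ∑ j, ∑ l, if i < j ∧ j < l ∧ π l < π i ∧ π i < π j then 1 else 0

open Finset in
/-- Number of occurrences of 312. -/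
def o2 {n : ℕ} (π : Equiv.Perm (Fin n)) : ℕ :=
  ∑ i, ∑ j, ∑ l, if i < j ∧ j < l ∧ π j < π l ∧ π l < π i then 1 else 0

theorem o1_eq_card {n : ℕ} (π : Equiv.Perm (Fin n)) :
    o1 π = (Finset.univ.filter (fun t : Fin n × Fin n × Fin n =>
      t.1 < t.2.1 ∧ t.2.1 < t.2.2 ∧ π t.2.2 < π t.1 ∧ π t.1 < π t.2.1)).card := by
  rw [Finset.card_filter, Fintype.sum_prod_type]
  simp only [Fintype.sum_prod_type]
  rfl

theorem o2_eq_card {n : ℕ} (π : Equiv.Perm (Fin n)) :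
    o2 π = (Finset.univ.filter (fun t : Fin n × Fin n × Fin n =>
      t.1 < t.2.1 ∧ t.2.1 < t.2.2 ∧ π t.2.1 < π t.2.2 ∧ π t.2.2 < π t.1)).card := by
  rw [Finset.card_filter, Fintype.sum_prod_type]
  simp only [Fintype.sum_prod_type]
  rfl

/-- functions from `Fin 3` as triples -/
def tripleEquiv (n : ℕ) : (Fin 3 → Fin n) ≃ Fin n × Fin n × Fin n where
  toFun f := (f 0, f 1, f 2)
  invFun t := ![t.1, t.2.1, t.2.2]
  left_inv f := by ext i; fin_cases i <;> rfl
  right_inv t := rfl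

theorem occ231 {n : ℕ} (π : Equiv.Perm (Fin n)) : occCount p231 π = o1 π := by
  rw [o1_eq_card, occCount, ← Fintype.card_subtype, ← Nat.card_eq_fintype_card]
  refine Nat.card_congr ((tripleEquiv n).subtypeEquiv ?_)
  intro f
  simp only [Fin.strictMono_iff_lt_succ, Fin.forall_fin_succ, tripleEquiv, p231]
  simp
  constructor
  · rintro ⟨⟨h1, h2⟩, h⟩
    grind
  · rintro ⟨h1, h2, h3, h4⟩
    grind

theorem occ312 {n : ℕ} (π : Equiv.Perm (Fin n)) : occCount p312 π = o2 π := by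
  rw [o2_eq_card, occCount, ← Fintype.card_subtype, ← Nat.card_eq_fintype_card]
  refine Nat.card_congr ((tripleEquiv n).subtypeEquiv ?_)
  intro f
  simp only [Fin.strictMono_iff_lt_succ, Fin.forall_fin_succ, tripleEquiv, p312]
  simp
  constructor
  · rintro ⟨⟨h1, h2⟩, h⟩
    grind
  · rintro ⟨h1, h2, h3, h4⟩
    grind

theorem occ_rev {n : ℕ} (α : Equiv.Perm (Fin 3)) (π : Equiv.Perm (Fin n)) :
    occCount (Fin.revPerm.trans α) (Fin.revPerm.trans π) = occCount α π := by
  refine Nat.card_congr (((Equiv.arrowCongr Fin.revPerm Fin.revPerm)).subtypeEquiv ?_)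
  intro f
  have e : (Fin.revPerm.arrowCongr Fin.revPerm) f = fun a => (f a.rev).rev := by
    ext a; simp [Equiv.arrowCongr]
  rw [e]
  simp only [Equiv.trans_apply, Fin.revPerm_apply]
  refine and_congr ?_ ?_
  · constructor
    · intro h a b hab
      simp only [Fin.rev_lt_rev]
      exact h (by simpa using hab)
    · intro h a b hab
      have := @h b.rev a.rev (by simpa using hab)
      simpa using this
  · constructor
    · intro h a b
      have := h a.rev b.rev
      simpa using this
    · intro h a b
      have := h a.rev b.rev
      simpa using this

/-- Number of permutations with `a` occurrences of 231 and `b` of 312. -/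
def G (n a b : ℕ) : ℕ :=
  (Finset.univ.filter (fun π : Equiv.Perm (Fin n) => o1 π = a ∧ o2 π = b)).card

theorem sCB_231 (n : ℕ) : sContainBoth p231 p312 n = G n 1 1 := by
  rw [sContainBoth, G, ← Fintype.card_subtype, ← Nat.card_eq_fintype_card]
  simp only [containsOnce, occ231, occ312]

theorem sCB_132 (n : ℕ) : sContainBoth p132 p213 n = G n 1 1 := by
  rw [← sCB_231]
  have e1 : p132 = Fin.revPerm.trans p231 := by decide
  have e2 : p213 = Fin.revPerm.trans p312 := by decide
  refine (Nat.card_congr ((Equiv.equivCongr Fin.revPerm (Equiv.refl _)).subtypeEquiv ?_)).symm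
  intro π
  have : (Equiv.equivCongr Fin.revPerm (Equiv.refl _)) π = Fin.revPerm.trans π := by
    ext; simp [Equiv.equivCongr]
  rw [this]
  simp only [containsOnce, e1, e2, occ_rev]

/-- Direct sum of permutations. -/
def ds {k m : ℕ} (B : Equiv.Perm (Fin k)) (σ : Equiv.Perm (Fin m)) : Equiv.Perm (Fin (k + m)) :=
  finSumFinEquiv.permCongr (Equiv.sumCongr B σ)

theorem ds_castAdd {k m : ℕ} (B : Equiv.Perm (Fin k)) (σ : Equiv.Perm (Fin m)) (i : Fin k) :
    ds B σ (Fin.castAdd m i) = Fin.castAdd m (B i) := by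
  simp [ds, Equiv.permCongr_apply]

theorem ds_natAdd {k m : ℕ} (B : Equiv.Perm (Fin k)) (σ : Equiv.Perm (Fin m)) (i : Fin m) :
    ds B σ (Fin.natAdd k i) = Fin.natAdd k (σ i) := by
  simp [ds, Equiv.permCongr_apply]

theorem ca_lt_na {k m : ℕ} (i : Fin k) (j : Fin m) : Fin.castAdd m i < Fin.natAdd k j := by
  rw [Fin.lt_def, Fin.val_castAdd, Fin.val_natAdd]; omega

theorem na_lt_ca {k m : ℕ} (i : Fin k) (j : Fin m) : ¬ Fin.natAdd k j < Fin.castAdd m i := by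
  rw [Fin.lt_def, Fin.val_castAdd, Fin.val_natAdd]; omega

theorem ca_lt_ca {k m : ℕ} (i j : Fin k) : Fin.castAdd m i < Fin.castAdd m j ↔ i < j := by
  rw [Fin.lt_def, Fin.val_castAdd, Fin.val_castAdd, Fin.lt_def]

theorem na_lt_na {k m : ℕ} (i j : Fin m) : Fin.natAdd k i < Fin.natAdd k j ↔ i < j := by
  rw [Fin.lt_def, Fin.val_natAdd, Fin.val_natAdd, Fin.lt_def]; omega

theorem o1_ds {k m : ℕ} (B : Equiv.Perm (Fin k)) (σ : Equiv.Perm (Fin m)) :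
    o1 (ds B σ) = o1 B + o1 σ := by
  simp only [o1, Fin.sum_univ_add, ds_castAdd, ds_natAdd, ca_lt_na, na_lt_ca, ca_lt_ca, na_lt_na]
  simp

theorem o2_ds {k m : ℕ} (B : Equiv.Perm (Fin k)) (σ : Equiv.Perm (Fin m)) :
    o2 (ds B σ) = o2 B + o2 σ := by
  simp only [o2, Fin.sum_univ_add, ds_castAdd, ds_natAdd, ca_lt_na, na_lt_ca, ca_lt_ca, na_lt_na]
  simp

theorem ds_inj {k m : ℕ} (B : Equiv.Perm (Fin k)) {σ τ : Equiv.Perm (Fin m)}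
    (h : ds B σ = ds B τ) : σ = τ := by
  ext i
  have := congrArg (fun e => ((e (Fin.natAdd k i) : Fin (k + m)) : ℕ)) h
  simpa [ds_natAdd] using this

theorem ds_surj {k m : ℕ} (B : Equiv.Perm (Fin k)) (π : Equiv.Perm (Fin (k + m)))
    (h : ∀ i : Fin k, π (Fin.castAdd m i) = Fin.castAdd m (B i)) : ∃ σ, ds B σ = π := by
  have hh : finSumFinEquiv.symm.permCongr π ∈ (Equiv.Perm.sumCongrHom (Fin k) (Fin m)).range := by
    apply Equiv.Perm.mem_sumCongrHom_range_of_perm_mapsTo_inl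
    rintro _ ⟨i, rfl⟩
    exact ⟨B i, by simp [Equiv.permCongr_apply, h]⟩
  obtain ⟨⟨C, σ⟩, hC⟩ := hh
  have key : ds C σ = π := by
    have := congrArg (finSumFinEquiv.permCongr) hC
    rw [ds]
    refine Eq.trans this ?_
    ext x; simp [Equiv.permCongr_apply]
  refine ⟨σ, ?_⟩
  have : C = B := by
    ext i
    have := h i
    rw [← key, ds_castAdd] at this
    simpa using congrArg Fin.val this
  rw [← this, key]

/-- `π` starts with the word `T 0, …, T (k-1)`. -/
def Pat {n : ℕ} (k : ℕ) (T : ℕ → ℕ) (π : Equiv.Perm (Fin n)) : Prop :=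
  ∀ i : Fin n, (i : ℕ) < k → (π i : ℕ) = T i

instance {n : ℕ} (k : ℕ) (T : ℕ → ℕ) (π : Equiv.Perm (Fin n)) : Decidable (Pat k T π) := by
  unfold Pat; infer_instance

theorem block_count {k m : ℕ} (B : Equiv.Perm (Fin k)) (T : ℕ → ℕ) (hT : ∀ i : Fin k, T i = B i)
    (a b a' b' : ℕ) (ha : a' = o1 B + a) (hb : b' = o2 B + b) :
    (Finset.univ.filter (fun π : Equiv.Perm (Fin (k + m)) =>
      (o1 π = a' ∧ o2 π = b') ∧ Pat k T π)).card = G m a b := by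
  symm
  apply Finset.card_bij (fun σ _ => ds B σ)
  · intro σ hσ
    simp only [Finset.mem_filter, Finset.mem_univ, true_and] at hσ ⊢
    refine ⟨⟨by rw [o1_ds, hσ.1, ha], by rw [o2_ds, hσ.2, hb]⟩, ?_⟩
    intro i hi
    have : i = Fin.castAdd m ⟨i, hi⟩ := rfl
    rw [this, ds_castAdd]
    simp [hT ⟨i, hi⟩]
  · intro σ _ τ _ h
    exact ds_inj B h
  · intro π hπ
    simp only [Finset.mem_filter, Finset.mem_univ, true_and] at hπ
    obtain ⟨⟨h1, h2⟩, h3⟩ := hπ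
    obtain ⟨σ, rfl⟩ := ds_surj B π (by
      intro i
      ext
      rw [h3 _ (by simp)]
      simp [hT])
    rw [o1_ds] at h1
    rw [o2_ds] at h2
    exact ⟨σ, by simp; omega, rfl⟩

theorem block_zero {n k : ℕ} (B : Equiv.Perm (Fin k)) (T : ℕ → ℕ) (hT : ∀ i : Fin k, T i = B i)
    (a b : ℕ) (hk : k ≤ n) (hab : a < o1 B ∨ b < o2 B) :
    (Finset.univ.filter (fun π : Equiv.Perm (Fin n) =>
      (o1 π = a ∧ o2 π = b) ∧ Pat k T π)).card = 0 := by
  obtain ⟨m, rfl⟩ := Nat.exists_eq_add_of_le hk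
  rw [Finset.card_eq_zero, Finset.filter_eq_empty_iff]
  rintro π - ⟨⟨h1, h2⟩, h3⟩
  obtain ⟨σ, rfl⟩ := ds_surj B π (by
      intro i
      ext
      rw [h3 _ (by simp)]
      simp [hT])
  rw [o1_ds] at h1
  rw [o2_ds] at h2
  omega

/-- Extension of a permutation by the identity. -/
def extId {n : ℕ} (π : Equiv.Perm (Fin n)) (i : ℕ) : ℕ := if h : i < n then π ⟨i, h⟩ else i

theorem extId_lt {n : ℕ} (π : Equiv.Perm (Fin n)) {i : ℕ} (h : i < n) : extId π i = π ⟨i, h⟩ := by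
  simp [extId, h]

theorem extId_lt_n {n : ℕ} (π : Equiv.Perm (Fin n)) {i : ℕ} (h : i < n) : extId π i < n := by
  rw [extId_lt π h]; exact Fin.is_lt _

theorem extId_ge {n : ℕ} (π : Equiv.Perm (Fin n)) {i : ℕ} (h : n ≤ i) : extId π i = i := by
  simp [extId, Nat.not_lt.2 h]

theorem extId_inv {n : ℕ} (π : Equiv.Perm (Fin n)) (i : ℕ) : extId π (extId π⁻¹ i) = i := by
  rcases Nat.lt_or_ge i n with h | h
  · rw [extId_lt _ (extId_lt_n _ h)]
    have : (⟨extId π⁻¹ i, extId_lt_n _ h⟩ : Fin n) = π⁻¹ ⟨i, h⟩ := by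
      ext; simp [extId_lt _ h]
    rw [this]; simp
  · rw [extId_ge _ h, extId_ge _ h]

theorem U1_ext {n : ℕ} (π : Equiv.Perm (Fin n)) (h : o1 π ≤ 1) : U1 (extId π) := by
  rw [o1_eq_card, Finset.card_le_one] at h
  have bd : ∀ i j l, i < j → j < l → extId π l < extId π i → l < n := by
    intro i j l h1 h2 h3
    by_contra hc
    rw [extId_ge π (i := l) (by omega)] at h3
    rcases Nat.lt_or_ge i n with h | h
    · have := extId_lt_n π h; omega
    · rw [extId_ge π h] at h3; omega
  intro i j l i' j' l' h1 h2 h3 h4 h1' h2' h3' h4'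
  have b := bd i j l h1 h2 h3
  have b' := bd i' j' l' h1' h2' h3'
  rw [extId_lt π b, extId_lt π (i := i) (by omega)] at h3
  rw [extId_lt π (i := i) (by omega), extId_lt π (i := j) (by omega)] at h4
  rw [extId_lt π b', extId_lt π (i := i') (by omega)] at h3'
  rw [extId_lt π (i := i') (by omega), extId_lt π (i := j') (by omega)] at h4'
  have := h (⟨i, by omega⟩, ⟨j, by omega⟩, ⟨l, b⟩) (by simp; exact ⟨h1, h2, h3, h4⟩)
    (⟨i', by omega⟩, ⟨j', by omega⟩, ⟨l', b'⟩) (by simp; exact ⟨h1', h2', h3', h4'⟩)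
  simpa using this

theorem U2_ext {n : ℕ} (π : Equiv.Perm (Fin n)) (h : o2 π ≤ 1) : U2 (extId π) := by
  rw [o2_eq_card, Finset.card_le_one] at h
  have bd : ∀ i j l, i < j → j < l → extId π l < extId π i → l < n := by
    intro i j l h1 h2 h3
    by_contra hc
    rw [extId_ge π (i := l) (by omega)] at h3
    rcases Nat.lt_or_ge i n with h | h
    · have := extId_lt_n π h; omega
    · rw [extId_ge π h] at h3; omega
  intro i j l i' j' l' h1 h2 h3 h4 h1' h2' h3' h4'
  have b := bd i j l h1 h2 h4
  have b' := bd i' j' l' h1' h2' h4'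
  rw [extId_lt π b, extId_lt π (i := i) (by omega)] at h4
  rw [extId_lt π b, extId_lt π (i := j) (by omega)] at h3
  rw [extId_lt π b', extId_lt π (i := i') (by omega)] at h4'
  rw [extId_lt π b', extId_lt π (i := j') (by omega)] at h3'
  have := h (⟨i, by omega⟩, ⟨j, by omega⟩, ⟨l, b⟩) (by simp; exact ⟨h1, h2, h3, h4⟩)
    (⟨i', by omega⟩, ⟨j', by omega⟩, ⟨l', b'⟩) (by simp; exact ⟨h1', h2', h3', h4'⟩)
  simpa using this

theorem pat_iff {n k : ℕ} (T : ℕ → ℕ) (π : Equiv.Perm (Fin n)) (hk : k ≤ n) :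
    Pat k T π ↔ ∀ i, i < k → extId π i = T i := by
  constructor
  · intro h i hi
    rw [extId_lt π (by omega)]
    exact h ⟨i, by omega⟩ hi
  · intro h i hi
    have := h i hi
    rwa [extId_lt π i.2] at this

/-- Number of permutations with the given statistics starting with a given word. -/
def cnt (n a b k : ℕ) (T : ℕ → ℕ) : ℕ :=
  (Finset.univ.filter (fun π : Equiv.Perm (Fin n) =>
      (o1 π = a ∧ o2 π = b) ∧ Pat k T π)).card

/-- a word as a function -/
def wd (l : List ℕ) (i : ℕ) : ℕ := l.getD i 0

theorem all3 (f : ℕ → ℕ) (x y z : ℕ) :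
    (∀ i, i < 3 → f i = wd [x, y, z] i) ↔ (f 0 = x ∧ f 1 = y ∧ f 2 = z) := by
  constructor
  · intro h
    exact ⟨h 0 (by omega), h 1 (by omega), h 2 (by omega)⟩
  · rintro ⟨h0, h1, h2⟩ i hi
    interval_cases i <;> simpa [wd]

theorem all4 (f : ℕ → ℕ) (x y z w : ℕ) :
    (∀ i, i < 4 → f i = wd [x, y, z, w] i) ↔ (f 0 = x ∧ f 1 = y ∧ f 2 = z ∧ f 3 = w) := by
  constructor
  · intro h
    exact ⟨h 0 (by omega), h 1 (by omega), h 2 (by omega), h 3 (by omega)⟩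
  · rintro ⟨h0, h1, h2, h3⟩ i hi
    interval_cases i <;> simpa [wd]

theorem pointwise {n : ℕ} (hn : 4 ≤ n) (π : Equiv.Perm (Fin n)) (h1 : o1 π ≤ 1) (h2 : o2 π ≤ 1) :
    (∑ v ∈ Finset.range n, if Pat (v + 1) (fun i => v - i) π then 1 else 0)
    + (if Pat 3 (wd [1, 2, 0]) π then 1 else 0)
    + (if Pat 3 (wd [2, 0, 1]) π then 1 else 0)
    + (if Pat 4 (wd [1, 3, 0, 2]) π then 1 else 0)
    + (if Pat 4 (wd [2, 0, 3, 1]) π then 1 else 0)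
    + (if Pat 4 (wd [3, 1, 2, 0]) π then 1 else 0) = 1 := by
  have c := cls (extId_inv π) (g := extId π⁻¹)
    (fun x => by have := extId_inv π⁻¹ x; rwa [inv_inv] at this) (U1_ext π h1) (U2_ext π h2)
  have lt : extId π 0 < n := extId_lt_n π (by omega)
  have s : (∑ v ∈ Finset.range n, if Pat (v + 1) (fun i => v - i) π then 1 else 0)
      = if (∀ i, i < extId π 0 + 1 → extId π i = extId π 0 - i) then 1 else 0 := by
    rw [Finset.sum_eq_single (extId π 0)]
    · simp only [pat_iff _ π (show extId π 0 + 1 ≤ n by omega)]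
    · intro v hv hne
      rw [if_neg]
      rw [pat_iff _ _ (by have := Finset.mem_range.1 hv; omega)]
      intro h
      have := h 0 (by omega)
      omega
    · intro h; exact absurd (Finset.mem_range.2 lt) h
  rw [s]
  simp only [pat_iff _ π (show 3 ≤ n by omega), pat_iff _ π hn, all3, all4]
  generalize extId π = f at c
  rcases c with c | c | c | c | c | c
  · rw [if_pos c, if_neg, if_neg, if_neg, if_neg, if_neg]
    all_goals
      rintro ⟨q0, q1, q2⟩
      have a1 := c 1
      have a2 := c 2
      omega
  all_goals
    rw [if_neg (fun d : (∀ i, i < f 0 + 1 → f i = f 0 - i) => by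
      have a1 := d 1
      have a2 := d 2
      omega)]
    simp [c]

theorem decomp {n a b : ℕ} (hn : 4 ≤ n) (ha : a ≤ 1) (hb : b ≤ 1) :
    G n a b = (∑ v ∈ Finset.range n, cnt n a b (v + 1) (fun i => v - i))
      + cnt n a b 3 (wd [1, 2, 0]) + cnt n a b 3 (wd [2, 0, 1]) + cnt n a b 4 (wd [1, 3, 0, 2])
      + cnt n a b 4 (wd [2, 0, 3, 1]) + cnt n a b 4 (wd [3, 1, 2, 0]) := by
  rw [G]
  simp only [cnt, ← Finset.filter_filter]
  simp only [Finset.card_filter (p := fun π => Pat _ _ π)]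
  rw [Finset.sum_comm]
  simp only [← Finset.sum_add_distrib]
  rw [Finset.card_eq_sum_ones]
  refine Finset.sum_congr rfl ?_
  intro π hπ
  simp only [Finset.mem_filter, Finset.mem_univ, true_and] at hπ
  exact (pointwise hn π (by omega) (by omega)).symm

/-- 2413 -/
def b2413 : Equiv.Perm (Fin 4) := ⟨![1,3,0,2], ![2,0,3,1], by decide, by decide⟩
/-- 3142 -/
def b3142 : Equiv.Perm (Fin 4) := ⟨![2,0,3,1], ![1,3,0,2], by decide, by decide⟩
/-- 4231 -/
def b4231 : Equiv.Perm (Fin 4) := ⟨![3,1,2,0], ![3,1,2,0], by decide, by decide⟩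

theorem o1_rev (k : ℕ) : o1 (Fin.revPerm : Equiv.Perm (Fin k)) = 0 := by
  rw [o1_eq_card, Finset.card_eq_zero, Finset.filter_eq_empty_iff]
  rintro ⟨i, j, l⟩ -
  simp only [Fin.revPerm_apply, Fin.rev_lt_rev]
  intro h; omega

theorem o2_rev (k : ℕ) : o2 (Fin.revPerm : Equiv.Perm (Fin k)) = 0 := by
  rw [o2_eq_card, Finset.card_eq_zero, Finset.filter_eq_empty_iff]
  rintro ⟨i, j, l⟩ -
  simp only [Fin.revPerm_apply, Fin.rev_lt_rev]
  intro h; omega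

theorem dec_sum (n a b : ℕ) :
    (∑ v ∈ Finset.range n, cnt n a b (v + 1) (fun i => v - i)) = ∑ j ∈ Finset.range n, G j a b := by
  rw [← Finset.sum_range_reflect]
  refine Finset.sum_congr rfl ?_
  intro j hj
  have hj := Finset.mem_range.1 hj
  obtain ⟨d, rfl⟩ := Nat.exists_eq_add_of_lt hj
  have e : j + d + 1 - 1 - j = d := by omega
  rw [e, show j + d + 1 = (d + 1) + j by omega]
  exact block_count (Fin.revPerm : Equiv.Perm (Fin (d+1))) _ (by intro i; simp [Fin.val_rev]) a b a b
    (by rw [o1_rev]; omega) (by rw [o2_rev]; omega)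

theorem hT231 : ∀ i : Fin 3, wd [1, 2, 0] i = p231 i := by decide
theorem hT312 : ∀ i : Fin 3, wd [2, 0, 1] i = p312 i := by decide
theorem hT2413 : ∀ i : Fin 4, wd [1, 3, 0, 2] i = b2413 i := by decide
theorem hT3142 : ∀ i : Fin 4, wd [2, 0, 3, 1] i = b3142 i := by decide
theorem hT4231 : ∀ i : Fin 4, wd [3, 1, 2, 0] i = b4231 i := by decide

theorem v231 : o1 p231 = 1 ∧ o2 p231 = 0 := by decide +kernel
theorem v312 : o1 p312 = 0 ∧ o2 p312 = 1 := by decide +kernel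
theorem v2413 : o1 b2413 = 1 ∧ o2 b2413 = 1 := by decide +kernel
theorem v3142 : o1 b3142 = 1 ∧ o2 b3142 = 1 := by decide +kernel
theorem v4231 : o1 b4231 = 1 ∧ o2 b4231 = 1 := by decide +kernel

theorem cnt_eq {k m n : ℕ} (B : Equiv.Perm (Fin k)) (T : ℕ → ℕ) (hT : ∀ i : Fin k, T i = B i)
    {x y : ℕ} (hB : o1 B = x ∧ o2 B = y) (a b : ℕ) (hn : n = k + m) :
    cnt n (x + a) (y + b) k T = G m a b := by
  subst hn
  exact block_count B T hT a b _ _ (by rw [hB.1]) (by rw [hB.2])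

theorem cnt_zero {k n : ℕ} (B : Equiv.Perm (Fin k)) (T : ℕ → ℕ) (hT : ∀ i : Fin k, T i = B i)
    {x y : ℕ} (hB : o1 B = x ∧ o2 B = y) (a b : ℕ) (hn : k ≤ n) (h : a < x ∨ b < y) :
    cnt n a b k T = 0 :=
  block_zero B T hT a b hn (by rw [hB.1, hB.2]; exact h)

theorem R00 (n : ℕ) : G (n + 4) 0 0 = ∑ j ∈ Finset.range (n + 4), G j 0 0 := by
  rw [decomp (by omega) (by omega) (by omega), dec_sum,
    cnt_zero _ _ hT231 v231 _ _ (by omega) (by omega),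
    cnt_zero _ _ hT312 v312 _ _ (by omega) (by omega),
    cnt_zero _ _ hT2413 v2413 _ _ (by omega) (by omega),
    cnt_zero _ _ hT3142 v3142 _ _ (by omega) (by omega),
    cnt_zero _ _ hT4231 v4231 _ _ (by omega) (by omega)]
  simp only [add_zero]

theorem R10 (n : ℕ) : G (n + 4) 1 0 = ∑ j ∈ Finset.range (n + 4), G j 1 0 + G (n + 1) 0 0 := by
  rw [decomp (by omega) (by omega) (by omega), dec_sum,
    cnt_eq (m := n + 1) _ _ hT231 v231 0 0 (by omega),
    cnt_zero _ _ hT312 v312 _ _ (by omega) (by omega),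
    cnt_zero _ _ hT2413 v2413 _ _ (by omega) (by omega),
    cnt_zero _ _ hT3142 v3142 _ _ (by omega) (by omega),
    cnt_zero _ _ hT4231 v4231 _ _ (by omega) (by omega)]
  simp only [add_zero]

theorem R01 (n : ℕ) : G (n + 4) 0 1 = ∑ j ∈ Finset.range (n + 4), G j 0 1 + G (n + 1) 0 0 := by
  rw [decomp (by omega) (by omega) (by omega), dec_sum,
    cnt_eq (m := n + 1) _ _ hT312 v312 0 0 (by omega),
    cnt_zero _ _ hT231 v231 _ _ (by omega) (by omega),
    cnt_zero _ _ hT2413 v2413 _ _ (by omega) (by omega),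
    cnt_zero _ _ hT3142 v3142 _ _ (by omega) (by omega),
    cnt_zero _ _ hT4231 v4231 _ _ (by omega) (by omega)]
  simp only [add_zero]

theorem R11 (n : ℕ) : G (n + 4) 1 1 = ∑ j ∈ Finset.range (n + 4), G j 1 1 + G (n + 1) 0 1
    + G (n + 1) 1 0 + 3 * G n 0 0 := by
  rw [decomp (by omega) (by omega) (by omega), dec_sum,
    cnt_eq (m := n + 1) _ _ hT231 v231 0 1 (by omega),
    cnt_eq (m := n + 1) _ _ hT312 v312 1 0 (by omega),
    cnt_eq (m := n) _ _ hT2413 v2413 0 0 (by omega),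
    cnt_eq (m := n) _ _ hT3142 v3142 0 0 (by omega),
    cnt_eq (m := n) _ _ hT4231 v4231 0 0 (by omega)]
  omega

theorem base00 : G 0 0 0 = 1 ∧ G 1 0 0 = 1 ∧ G 2 0 0 = 2 ∧ G 3 0 0 = 4 := by decide +kernel
theorem base10 : G 0 1 0 = 0 ∧ G 1 1 0 = 0 ∧ G 2 1 0 = 0 ∧ G 3 1 0 = 1 := by decide +kernel
theorem base01 : G 0 0 1 = 0 ∧ G 1 0 1 = 0 ∧ G 2 0 1 = 0 ∧ G 3 0 1 = 1 := by decide +kernel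
theorem base11 : G 0 1 1 = 0 ∧ G 1 1 1 = 0 ∧ G 2 1 1 = 0 ∧ G 3 1 1 = 0 := by decide +kernel

theorem f00 (n : ℕ) : G (n + 1) 0 0 = 2 ^ n := by
  obtain ⟨b0, b1, b2, b3⟩ := base00
  match n with
  | 0 => exact b1
  | 1 => exact b2
  | 2 => exact b3
  | n + 3 =>
    induction n with
    | zero =>
      have := R00 0
      simp [Finset.sum_range_succ, b0, b1, b2, b3] at this
      simpa using this
    | succ n ih =>
      have r := R00 n
      have r' := R00 (n + 1)
      rw [show n + 1 + 4 = (n + 4) + 1 by omega, Finset.sum_range_succ, ← r] at r'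
      rw [show n + 1 + 3 + 1 = n + 4 + 1 by omega, r', ih]
      ring

theorem f10 (n : ℕ) : 2 * G (n + 4) 1 0 = (n + 4) * 2 ^ n := by
  obtain ⟨b0, b1, b2, b3⟩ := base10
  induction n with
  | zero =>
    have := R10 0
    simp [Finset.sum_range_succ, b0, b1, b2, b3, f00] at this
    simp
    omega
  | succ n ih =>
    have r := R10 n
    have r' := R10 (n + 1)
    rw [show n + 1 + 4 = (n + 4) + 1 by omega, Finset.sum_range_succ] at r'
    rw [f00] at r r'
    rw [pow_succ 2 n] at r' ⊢
    rw [show n + 1 + 4 = (n + 4) + 1 by omega]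
    nlinarith

theorem f01 (n : ℕ) : 2 * G (n + 4) 0 1 = (n + 4) * 2 ^ n := by
  obtain ⟨b0, b1, b2, b3⟩ := base01
  induction n with
  | zero =>
    have := R01 0
    simp [Finset.sum_range_succ, b0, b1, b2, b3, f00] at this
    simp
    omega
  | succ n ih =>
    have r := R01 n
    have r' := R01 (n + 1)
    rw [show n + 1 + 4 = (n + 4) + 1 by omega, Finset.sum_range_succ] at r'
    rw [f00] at r r'
    rw [pow_succ 2 n] at r' ⊢
    rw [show n + 1 + 4 = (n + 4) + 1 by omega]
    nlinarith

theorem small11 : G 4 1 1 = 3 ∧ G 5 1 1 = 6 ∧ G 6 1 1 = 17 ∧ G 7 1 1 = 42 := by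
  obtain ⟨b0, b1, b2, b3⟩ := base11
  obtain ⟨c0, c1, c2, c3⟩ := base10
  obtain ⟨d0, d1, d2, d3⟩ := base01
  obtain ⟨e0, e1, e2, e3⟩ := base00
  have r0 := R11 0
  have r1 := R11 1
  have r2 := R11 2
  have r3 := R11 3
  have u := f10 0
  have v := f01 0
  simp [Finset.sum_range_succ, *] at r0 r1 r2 r3 u v
  omega

theorem f11 (n : ℕ) : 4 * G (n + 7) 1 1 = ((n + 7) ^ 2 + 21 * (n + 7) - 28) * 2 ^ n := by
  have e : (n + 7) ^ 2 + 21 * (n + 7) - 28 = n ^ 2 + 35 * n + 168 := by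
    rw [Nat.sub_eq_iff_eq_add (by nlinarith)]; ring
  rw [e]
  clear e
  induction n with
  | zero => simp [small11]
  | succ n ih =>
    have r := R11 (n + 3)
    have r' := R11 (n + 4)
    have u := f10 n
    have u' := f10 (n + 1)
    have v := f01 n
    have v' := f01 (n + 1)
    rw [show n + 4 + 4 = (n + 7) + 1 by omega, Finset.sum_range_succ] at r'
    simp only [show n + 3 + 4 = n + 7 by omega, show n + 3 + 1 = n + 4 by omega,
      show n + 4 + 1 = n + 1 + 4 by omega, show n + 1 + 7 = n + 7 + 1 by omega] at r r' ⊢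
    have w := f00 (n + 2)
    have w' := f00 (n + 3)
    simp only [show n + 2 + 1 = n + 3 by omega, show n + 3 + 1 = n + 4 by omega, pow_add] at w w'
    rw [pow_succ 2 n] at u' v' ⊢
    rw [w] at r
    rw [w'] at r'
    nlinarith

theorem key : (∀ n : ℕ, 7 ≤ n → 2 ^ 9 * G n 1 1 = (n ^ 2 + 21 * n - 28) * 2 ^ n) ∧
    G 6 1 1 = 17 ∧ G 5 1 1 = 6 ∧ G 4 1 1 = 3 := by
  refine ⟨?_, small11.2.2.1, small11.2.1, small11.1⟩
  intro n hn
  obtain ⟨m, rfl⟩ := Nat.exists_eq_add_of_le hn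
  rw [add_comm 7 m]
  have := f11 m
  rw [pow_add 2 m 7, ← mul_assoc, ← this]
  ring

/-- Theorem 5.3: for each listed pair `{α,β}`, `s_n(∅;{α,β}) = (n²+21n−28)·2^{n−9}`
for `n ≥ 7` (stated in the equivalent truncation-free form
`2⁹·s_n(∅;{α,β}) = (n²+21n−28)·2ⁿ`), with `s_6 = 17`, `s_5 = 6`, and `s_4 = 3`. -/
theorem sContainBoth_eq_of_mem_classI :
    ∀ p ∈ [(p132, p213), (p231, p312)],
      (∀ n : ℕ, 7 ≤ n →
          2 ^ 9 * sContainBoth p.1 p.2 n = (n ^ 2 + 21 * n - 28) * 2 ^ n) ∧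
        sContainBoth p.1 p.2 6 = 17 ∧
        sContainBoth p.1 p.2 5 = 6 ∧
        sContainBoth p.1 p.2 4 = 3 := by
  intro p hp
  simp only [List.mem_cons, List.not_mem_nil, or_false] at hp
  rcases hp with rfl | rfl
  · simpa only [sCB_132] using key
  · simpa only [sCB_231] using key
end

section
/- For each unordered pair {α,β} in {{132,231}, {132,312}, {213,231}, {213,312}} of patterns of length three, and for every n ≥ 4, the number of permutations of {1,…,n} that contain α exactly once and contain β exactly once is s_n(∅;{α,β}) = 2^{n−3}. -/
theorem occCount_inv {k n : ℕ} (α : Equiv.Perm (Fin k)) (π : Equiv.Perm (Fin n)) :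
    occCount α⁻¹ π⁻¹ = occCount α π := by
  have key : ∀ {k n : ℕ} (α : Equiv.Perm (Fin k)) (π : Equiv.Perm (Fin n)) (f : Fin k → Fin n),
      (StrictMono f ∧ ∀ a b : Fin k, α a < α b ↔ π (f a) < π (f b)) →
      (StrictMono (fun i => π (f (α⁻¹ i))) ∧ ∀ a b : Fin k, α⁻¹ a < α⁻¹ b ↔
        π⁻¹ (π (f (α⁻¹ a))) < π⁻¹ (π (f (α⁻¹ b)))) := by
    intro k n α π f ⟨h1, h2⟩
    refine ⟨fun a b hab => (h2 _ _).1 (by simpa using hab), fun a b => ?_⟩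
    simp [h1.lt_iff_lt]
  unfold occCount
  refine Nat.card_congr
    ⟨fun f => ⟨fun i => π⁻¹ (f.1 (α i)), ?_⟩, fun f => ⟨fun i => π (f.1 (α⁻¹ i)), key α π f.1 f.2⟩,
      fun f => by ext; simp, fun f => by ext; simp⟩
  have := key α⁻¹ π⁻¹ f.1 f.2
  simpa only [inv_inv] using this

theorem occCount_rev {k n : ℕ} (α : Equiv.Perm (Fin k)) (π : Equiv.Perm (Fin n)) :
    occCount (α * Fin.revPerm) (π * Fin.revPerm) = occCount α π := by
  unfold occCount
  refine Nat.card_congr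
    ⟨fun f => ⟨fun i => (f.1 i.rev).rev, ?_⟩, fun f => ⟨fun i => (f.1 i.rev).rev, ?_⟩,
      fun f => by ext; simp, fun f => by ext; simp⟩
  · refine ⟨fun a b hab => ?_, fun a b => ?_⟩
    · exact Fin.rev_lt_rev.2 (f.2.1 (Fin.rev_lt_rev.2 hab))
    · have := f.2.2 a.rev b.rev
      simpa using this
  · refine ⟨fun a b hab => ?_, fun a b => ?_⟩
    · exact Fin.rev_lt_rev.2 (f.2.1 (Fin.rev_lt_rev.2 hab))
    · have := f.2.2 a.rev b.rev
      simpa using this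

theorem occCount_compl {k n : ℕ} (α : Equiv.Perm (Fin k)) (π : Equiv.Perm (Fin n)) :
    occCount (Fin.revPerm * α) (Fin.revPerm * π) = occCount α π := by
  unfold occCount
  refine Nat.card_congr (Equiv.subtypeEquivRight fun f => ?_)
  refine and_congr_right fun _ => ?_
  simp only [Equiv.Perm.mul_apply, Fin.revPerm_apply, Fin.rev_lt_rev]
  exact forall_comm

theorem sCB_swap (α β : Equiv.Perm (Fin 3)) (n : ℕ) : sContainBoth α β n = sContainBoth β α n :=
  Nat.card_congr (Equiv.subtypeEquivRight fun _ => and_comm)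

theorem sCB_inv (α β : Equiv.Perm (Fin 3)) (n : ℕ) :
    sContainBoth α⁻¹ β⁻¹ n = sContainBoth α β n :=
  (Nat.card_congr ((Equiv.inv (Equiv.Perm (Fin n))).subtypeEquiv fun π => by
    simp [containsOnce, occCount_inv])).symm

theorem sCB_rev (α β : Equiv.Perm (Fin 3)) (n : ℕ) :
    sContainBoth (α * Fin.revPerm) (β * Fin.revPerm) n = sContainBoth α β n :=
  (Nat.card_congr ((Equiv.mulRight (Fin.revPerm : Equiv.Perm (Fin n))).subtypeEquiv fun π => by
    simp [containsOnce, occCount_rev])).symm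

theorem sCB_compl (α β : Equiv.Perm (Fin 3)) (n : ℕ) :
    sContainBoth (Fin.revPerm * α) (Fin.revPerm * β) n = sContainBoth α β n :=
  (Nat.card_congr ((Equiv.mulLeft (Fin.revPerm : Equiv.Perm (Fin n))).subtypeEquiv fun π => by
    simp [containsOnce, occCount_compl])).symm

/-- Insert the maximum at position `p`. -/
def insMax {n : ℕ} (p : Fin (n+1)) (σ : Equiv.Perm (Fin n)) : Equiv.Perm (Fin (n+1)) :=
  (finSuccEquiv' p).trans ((Equiv.optionCongr σ).trans (finSuccEquiv' (Fin.last n)).symm)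

theorem insMax_self {n : ℕ} (p : Fin (n+1)) (σ : Equiv.Perm (Fin n)) :
    insMax p σ p = Fin.last n := by
  simp [insMax]

theorem insMax_succAbove {n : ℕ} (p : Fin (n+1)) (σ : Equiv.Perm (Fin n)) (i : Fin n) :
    insMax p σ (p.succAbove i) = (σ i).castSucc := by
  simp [insMax]

theorem insMax_injective {n : ℕ} (p : Fin (n+1)) : Function.Injective (insMax (n := n) p) := by
  intro σ τ h
  ext i
  have := congrArg (fun e => e (p.succAbove i)) h
  simp only [insMax_succAbove] at this
  rw [Fin.castSucc_injective _ this]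

theorem exists_insMax {n : ℕ} (p : Fin (n+1)) (π : Equiv.Perm (Fin (n+1)))
    (h : π p = Fin.last n) : ∃ σ, insMax p σ = π := by
  have hne : ∀ i, π (p.succAbove i) ≠ Fin.last n := fun i hi =>
    Fin.succAbove_ne p i (π.injective (hi.trans h.symm))
  let g : Fin n → Fin n := fun i => (π (p.succAbove i)).castPred (hne i)
  have hg : Function.Injective g := by
    intro i j hij
    have := congrArg Fin.castSucc hij
    simp only [g, Fin.castSucc_castPred] at this
    exact Fin.succAbove_right_injective (π.injective this)
  refine ⟨Equiv.ofBijective g (Finite.injective_iff_bijective.1 hg), ?_⟩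
  ext x
  rcases Fin.eq_self_or_eq_succAbove p x with rfl | ⟨i, rfl⟩
  · rw [insMax_self, h]
  · rw [insMax_succAbove]; simp [g]

theorem occCount_insMax {n : ℕ} (α : Equiv.Perm (Fin 3)) (h0 : α 0 < α 1) (h2 : α 2 < α 1)
    (p : Fin (n+1)) (hp : p = 0 ∨ p = Fin.last n) (σ : Equiv.Perm (Fin n)) :
    occCount α (insMax p σ) = occCount α σ := by
  unfold occCount
  symm
  refine Nat.card_eq_of_bijective (fun f => ⟨fun i => p.succAbove (f.1 i),
    (Fin.strictMono_succAbove p).comp f.2.1, fun a b => ?_⟩) ⟨?_, ?_⟩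
  · simp only [insMax_succAbove, Fin.castSucc_lt_castSucc_iff]
    exact f.2.2 a b
  · intro f g hfg
    ext i : 2
    have := congrFun (congrArg Subtype.val hfg) i
    exact Fin.succAbove_right_injective this
  · rintro ⟨f, hf, hf'⟩
    have hne : ∀ i, f i ≠ p := by
      have a0 := (hf' _ _).1 h0
      have a2 := (hf' _ _).1 h2
      have b0 : f 0 < f 1 := hf (by decide)
      have b2 : f 1 < f 2 := hf (by decide)
      have c0 : f 0 ≠ p := by
        intro h; rw [h, insMax_self] at a0; exact absurd a0 (not_lt.2 (Fin.le_last _))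
      have c2 : f 2 ≠ p := by
        intro h; rw [h, insMax_self] at a2; exact absurd a2 (not_lt.2 (Fin.le_last _))
      have c1 : f 1 ≠ p := by
        rintro h
        rcases hp with hp | hp
        · rw [h, hp] at b0; exact absurd b0 (Fin.not_lt_zero _)
        · rw [h, hp] at b2; exact absurd b2 (not_lt.2 (Fin.le_last _))
      intro i
      fin_cases i
      exacts [c0, c1, c2]
    choose g hg using fun i => Fin.exists_succAbove_eq (hne i)
    obtain rfl : (fun i => p.succAbove (g i)) = f := funext hg
    refine ⟨⟨g, ?_, ?_⟩, rfl⟩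
    · intro a b hab
      exact (Fin.strictMono_succAbove p).lt_iff_lt.1 (hf hab)
    · intro a b
      rw [hf' a b]
      simp only [insMax_succAbove, Fin.castSucc_lt_castSucc_iff]

theorem occ_unique {n : ℕ} (α : Equiv.Perm (Fin 3)) (π : Equiv.Perm (Fin n))
    (h : containsOnce α π) (f g : Fin 3 → Fin n)
    (hf : StrictMono f ∧ ∀ a b : Fin 3, α a < α b ↔ π (f a) < π (f b))
    (hg : StrictMono g ∧ ∀ a b : Fin 3, α a < α b ↔ π (g a) < π (g b)) : f = g := by
  have := (Nat.card_eq_one_iff_unique.1 h).1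
  exact congrArg Subtype.val (Subsingleton.elim (⟨f, hf⟩ : {f : Fin 3 → Fin n //
    StrictMono f ∧ ∀ a b : Fin 3, α a < α b ↔ π (f a) < π (f b)}) ⟨g, hg⟩)

theorem occ132 {n : ℕ} (π : Equiv.Perm (Fin n)) {a p b : Fin n} (h1 : a < p) (h2 : p < b)
    (h3 : π a < π b) (h4 : π b < π p) : StrictMono ![a,p,b] ∧
      ∀ i j : Fin 3, p132 i < p132 j ↔ π (![a,p,b] i) < π (![a,p,b] j) := by
  constructor
  · intro i j
    have := h1.trans h2
    fin_cases i <;> fin_cases j <;> simp [*]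
  · intro i j
    have := h3.trans h4
    fin_cases i <;> fin_cases j <;> simp [p132, *, le_of_lt]

theorem occ231_s9 {n : ℕ} (π : Equiv.Perm (Fin n)) {a p b : Fin n} (h1 : a < p) (h2 : p < b)
    (h3 : π b < π a) (h4 : π a < π p) : StrictMono ![a,p,b] ∧
      ∀ i j : Fin 3, p231 i < p231 j ↔ π (![a,p,b] i) < π (![a,p,b] j) := by
  constructor
  · intro i j
    have := h1.trans h2
    fin_cases i <;> fin_cases j <;> simp [*]
  · intro i j
    have := h3.trans h4
    fin_cases i <;> fin_cases j <;> simp [p231, *, le_of_lt]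

theorem max_pos {n : ℕ} (hn : 4 ≤ n) (π : Equiv.Perm (Fin (n+1))) (hA : containsOnce p132 π)
    (hB : containsOnce p231 π) : π 0 = Fin.last n ∨ π (Fin.last n) = Fin.last n := by
  obtain ⟨p, hp⟩ := π.surjective (Fin.last n)
  by_cases hp0 : p = 0
  · left; rw [← hp0, hp]
  by_cases hpl : p = Fin.last n
  · right; rw [← hpl, hp, hpl]
  exfalso
  have hmax : ∀ x, x ≠ p → π x < π p := by
    intro x hx
    rw [hp]
    exact Fin.lt_last_iff_ne_last.2 fun h => hx (π.injective (h.trans hp.symm))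
  have U1 : ∀ a b a' b', a < p → p < b → a' < p → p < b' → π a < π b → π a' < π b' →
      a = a' ∧ b = b' := by
    intro a b a' b' h1 h2 h3 h4 h5 h6
    have := occ_unique _ _ hA _ _ (occ132 π h1 h2 h5 (hmax _ h2.ne'))
      (occ132 π h3 h4 h6 (hmax _ h4.ne'))
    exact ⟨by simpa using congrFun this 0, by simpa using congrFun this 2⟩
  have U2 : ∀ a b a' b', a < p → p < b → a' < p → p < b' → π b < π a → π b' < π a' →
      a = a' ∧ b = b' := by
    intro a b a' b' h1 h2 h3 h4 h5 h6
    have := occ_unique _ _ hB _ _ (occ231_s9 π h1 h2 h5 (hmax _ h1.ne))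
      (occ231_s9 π h3 h4 h6 (hmax _ h3.ne))
    exact ⟨by simpa using congrFun this 0, by simpa using congrFun this 2⟩
  have T : ∀ a b, a < p → p < b → π a < π b ∨ π b < π a := fun a b h1 h2 =>
    lt_or_gt_of_ne fun h => (h1.trans h2).ne (π.injective h)
  have C : ∀ a b a' b' a'' b'', a < p → p < b → a' < p → p < b' → a'' < p → p < b'' →
      (a = a' ∧ b = b') ∨ (a = a'' ∧ b = b'') ∨ (a' = a'' ∧ b' = b'') := by
    intro a b a' b' a'' b'' h1 h2 h3 h4 h5 h6
    rcases T a b h1 h2 with t1 | t1 <;> rcases T a' b' h3 h4 with t2 | t2 <;>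
      rcases T a'' b'' h5 h6 with t3 | t3 <;>
      first
      | exact Or.inl (U1 _ _ _ _ h1 h2 h3 h4 t1 t2)
      | exact Or.inl (U2 _ _ _ _ h1 h2 h3 h4 t1 t2)
      | exact Or.inr (Or.inl (U1 _ _ _ _ h1 h2 h5 h6 t1 t3))
      | exact Or.inr (Or.inl (U2 _ _ _ _ h1 h2 h5 h6 t1 t3))
      | exact Or.inr (Or.inr (U1 _ _ _ _ h3 h4 h5 h6 t2 t3))
      | exact Or.inr (Or.inr (U2 _ _ _ _ h3 h4 h5 h6 t2 t3))
  have C' : ∀ a b a' b' a'' b'' : ℕ, a < p.1 → p.1 < b → a' < p.1 → p.1 < b' → a'' < p.1 →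
      p.1 < b'' → b < n+1 → b' < n+1 → b'' < n+1 →
      (a = a' ∧ b = b') ∨ (a = a'' ∧ b = b'') ∨ (a' = a'' ∧ b' = b'') := by
    intro a b a' b' a'' b'' h1 h2 h3 h4 h5 h6 l1 l2 l3
    have := C ⟨a, by omega⟩ ⟨b, l1⟩ ⟨a', by omega⟩ ⟨b', l2⟩ ⟨a'', by omega⟩ ⟨b'', l3⟩
      h1 h2 h3 h4 h5 h6
    simpa [Fin.ext_iff] using this
  have q0 : p.1 ≠ 0 := fun h => hp0 (Fin.ext h)
  have ql : p.1 ≠ n := fun h => hpl (Fin.ext h)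
  have qn := p.2
  rcases (by omega : p.1 = 1 ∨ p.1 = 2 ∨ 3 ≤ p.1) with h | h | h
  · have := C' 0 2 0 3 0 4; omega
  · have := C' 0 3 1 3 0 4; omega
  · have := C' 0 (p.1+1) 1 (p.1+1) 2 (p.1+1); omega

theorem sCB_succ {n : ℕ} (hn : 4 ≤ n) :
    sContainBoth p132 p231 (n+1) = 2 * sContainBoth p132 p231 n := by
  have hins : ∀ (p : Fin (n+1)) (σ : Equiv.Perm (Fin n)), (p = 0 ∨ p = Fin.last n) →
      ((containsOnce p132 (insMax p σ) ∧ containsOnce p231 (insMax p σ)) ↔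
      (containsOnce p132 σ ∧ containsOnce p231 σ)) := by
    intro p σ hp
    unfold containsOnce
    rw [occCount_insMax p132 (by decide) (by decide) p hp,
      occCount_insMax p231 (by decide) (by decide) p hp]
  unfold sContainBoth
  rw [two_mul, ← Nat.card_sum]
  symm
  refine Nat.card_eq_of_bijective (Sum.elim
    (fun σ => ⟨insMax 0 σ.1, (hins 0 σ.1 (Or.inl rfl)).2 σ.2⟩)
    (fun σ => ⟨insMax (Fin.last n) σ.1, (hins _ σ.1 (Or.inr rfl)).2 σ.2⟩)) ⟨?_, ?_⟩
  · have hne : ∀ σ τ : Equiv.Perm (Fin n), insMax 0 σ ≠ insMax (Fin.last n) τ := by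
      intro σ τ h
      have h1 := insMax_self 0 σ
      have h2 := insMax_self (Fin.last n) τ
      rw [← h] at h2
      have := (insMax 0 σ).injective (h1.trans h2.symm)
      simp [Fin.ext_iff] at this
      omega
    rintro (σ | σ) (τ | τ) h
    · exact congrArg _ (Subtype.ext (insMax_injective _ (congrArg Subtype.val h)))
    · exact absurd (congrArg Subtype.val h) (hne _ _)
    · exact absurd (congrArg Subtype.val h).symm (hne _ _)
    · exact congrArg _ (Subtype.ext (insMax_injective _ (congrArg Subtype.val h)))
  · rintro ⟨π, hπ⟩
    rcases max_pos hn π hπ.1 hπ.2 with h | h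
    · obtain ⟨σ, rfl⟩ := exists_insMax _ _ h
      exact ⟨Sum.inl ⟨σ, (hins _ _ (Or.inl rfl)).1 hπ⟩, rfl⟩
    · obtain ⟨σ, rfl⟩ := exists_insMax _ _ h
      exact ⟨Sum.inr ⟨σ, (hins _ _ (Or.inr rfl)).1 hπ⟩, rfl⟩

theorem occCount_fin3 {n : ℕ} (α : Equiv.Perm (Fin 3)) (π : Equiv.Perm (Fin n)) :
    occCount α π = Fintype.card {t : Fin n × Fin n × Fin n // (t.1 < t.2.1 ∧ t.2.1 < t.2.2) ∧
      ∀ a b : Fin 3, α a < α b ↔ π (![t.1, t.2.1, t.2.2] a) < π (![t.1, t.2.1, t.2.2] b)} := by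
  rw [← Nat.card_eq_fintype_card]
  unfold occCount
  symm
  refine Nat.card_eq_of_bijective (fun t => ⟨![t.1.1, t.1.2.1, t.1.2.2], ?_, t.2.2⟩) ⟨?_, ?_⟩
  · have h1 := t.2.1.1
    have h2 := t.2.1.2
    have := h1.trans h2
    intro i j
    fin_cases i <;> fin_cases j <;> simp [*]
  · rintro ⟨⟨a, b, c⟩, _⟩ ⟨⟨a', b', c'⟩, _⟩ h
    have := congrArg Subtype.val h
    simpa using this
  · rintro ⟨f, hf, hf'⟩
    have e : ![f 0, f 1, f 2] = f := by ext i; fin_cases i <;> rfl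
    refine ⟨⟨(f 0, f 1, f 2), ⟨hf (by decide), hf (by decide)⟩, ?_⟩, Subtype.ext e⟩
    simpa only [e] using hf'

theorem sCB_four : sContainBoth p132 p231 4 = 2 := by
  unfold sContainBoth containsOnce
  simp only [occCount_fin3]
  rw [Nat.card_eq_fintype_card]
  decide +kernel

theorem sCB_main (n : ℕ) (hn : 4 ≤ n) : sContainBoth p132 p231 n = 2 ^ (n - 3) := by
  induction n, hn using Nat.le_induction with
  | base => exact sCB_four
  | succ n hn ih =>
    rw [sCB_succ hn, ih, ← pow_succ']
    congr 1
    omega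

/-- Theorem 5.4: for each listed pair `{α,β}`, `s_n(∅;{α,β}) = 2^{n−3}` for `n ≥ 4`. -/
theorem sContainBoth_eq_of_mem_classJ :
    ∀ p ∈ [(p132, p231), (p132, p312), (p213, p231), (p213, p312)],
      ∀ n : ℕ, 4 ≤ n → sContainBoth p.1 p.2 n = 2 ^ (n - 3) := by
  have i1 : p132⁻¹ = p132 := by decide
  have i2 : p231⁻¹ = p312 := by decide
  have r1 : p132 * Fin.revPerm = p231 := by decide
  have r2 : p312 * Fin.revPerm = p213 := by decide
  have c1 : Fin.revPerm * p132 = p312 := by decide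
  have c2 : Fin.revPerm * p231 = p213 := by decide
  have A : ∀ n : ℕ, 4 ≤ n → sContainBoth p132 p312 n = 2 ^ (n - 3) := by
    intro n hn
    have := sCB_inv p132 p231 n
    rw [i1, i2] at this
    rw [this, sCB_main n hn]
  intro p hp n hn
  simp only [List.mem_cons, List.not_mem_nil, or_false] at hp
  rcases hp with rfl | rfl | rfl | rfl
  · exact sCB_main n hn
  · exact A n hn
  · have := sCB_rev p132 p312 n
    rw [r1, r2] at this
    rw [sCB_swap, this, A n hn]
  · have := sCB_compl p132 p231 n
    rw [c1, c2] at this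
    rw [sCB_swap, this, sCB_main n hn]
end

section
/- Let φ: S_{m−1} → S_m be defined by φ(π_1π_2⋯π_{m−1}) = (π_1+1)(π_2+1)⋯(π_{m−1}+1)·1. Then for every n ≥ 4: if σ is a permutation of {1,…,n−1} avoiding 123 and containing 312 exactly once, then φ(σ) is a permutation of {1,…,n} avoiding 123 and containing 312 exactly once; and if τ is a permutation of {1,…,n−1} avoiding 312 and containing 123 exactly once, then φ(τ) is a permutation of {1,…,n} avoiding 312 and containing 123 exactly once. -/
/-- `φ : S_m → S_{m+1}` appends a new smallest element at the end:
`φ(π₁…π_m) = (π₁+1)(π₂+1)⋯(π_m+1)·1`. -/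
def phi {m : ℕ} (π : Equiv.Perm (Fin m)) : Equiv.Perm (Fin (m + 1)) where
  toFun i := Fin.lastCases 0 (fun j => (π j).succ) i
  invFun v := Fin.cases (Fin.last m) (fun j => (π.symm j).castSucc) v
  left_inv i := by
    induction i using Fin.lastCases with
    | last => simp
    | cast j => simp
  right_inv v := by
    induction v using Fin.cases with
    | zero => simp
    | succ j => simp

theorem phi_castSucc_aux {m : ℕ} (π : Equiv.Perm (Fin m)) (j : Fin m) :
    phi π j.castSucc = (π j).succ := by
  simp [phi]

theorem phi_last_aux {m : ℕ} (π : Equiv.Perm (Fin m)) : phi π (Fin.last m) = 0 := by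
  simp [phi]

/-- If a pattern of length three ends in an ascent, `phi` preserves its number of occurrences. -/
theorem occCount_phi_aux {m : ℕ} (α : Equiv.Perm (Fin 3)) (hα : α 1 < α 2)
    (π : Equiv.Perm (Fin m)) : occCount α (phi π) = occCount α π := by
  unfold occCount
  symm
  refine Nat.card_congr (Equiv.ofBijective
    (fun f => ⟨fun a => (f.1 a).castSucc, ?_, ?_⟩) ⟨?_, ?_⟩)
  · intro a b hab
    exact Fin.castSucc_lt_castSucc_iff.2 (f.2.1 hab)
  · intro a b
    simp only [phi_castSucc_aux, Fin.succ_lt_succ_iff]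
    exact f.2.2 a b
  · intro f g hfg
    apply Subtype.ext
    funext a
    have h := congrFun (congrArg Subtype.val hfg) a
    exact Fin.castSucc_injective m h
  · rintro ⟨g, hg, hg2⟩
    have hlast : g 2 ≠ Fin.last m := by
      intro h
      have h1 := (hg2 1 2).1 hα
      rw [h, phi_last_aux] at h1
      exact absurd h1 (Fin.not_lt_zero _)
    have hne : ∀ a, g a ≠ Fin.last m := by
      intro a
      have h1 : g a ≤ g 2 := hg.monotone (Fin.le_last a)
      exact (lt_of_le_of_lt h1 (Fin.lt_last_iff_ne_last.2 hlast)).ne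
    choose f hf using fun a => Fin.exists_castSucc_eq.2 (hne a)
    obtain rfl : g = fun a => (f a).castSucc := funext fun a => (hf a).symm
    refine ⟨⟨f, ?_, ?_⟩, rfl⟩
    · intro a b hab
      exact Fin.castSucc_lt_castSucc_iff.1 (hg hab)
    · intro a b
      have h := hg2 a b
      simpa only [phi_castSucc_aux, Fin.succ_lt_succ_iff] using h

/-- For `n = m+1 ≥ 4`: `φ` maps `S_{n−1}(123;312)` into `S_n(123;312)` and
`S_{n−1}(312;123)` into `S_n(312;123)`. -/
theorem phi_mem_of_mem :
    ∀ m : ℕ, 4 ≤ m + 1 →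
      (∀ σ : Equiv.Perm (Fin m), avoids p123 σ → containsOnce p312 σ →
        avoids p123 (phi σ) ∧ containsOnce p312 (phi σ)) ∧
      (∀ τ : Equiv.Perm (Fin m), avoids p312 τ → containsOnce p123 τ →
        avoids p312 (phi τ) ∧ containsOnce p123 (phi τ)) := by
  intro m _
  have h1 : p123 1 < p123 2 := by decide
  have h2 : p312 1 < p312 2 := by decide
  unfold avoids containsOnce
  refine ⟨fun σ ha hb => ?_, fun σ ha hb => ?_⟩ <;>
    rw [occCount_phi_aux _ h1, occCount_phi_aux _ h2] <;> exact ⟨ha, hb⟩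
end
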